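/- Let z, w ∈ ℂ² be nonzero vectors and consider their stabilizers under the Higgs representation ρ of G = SU(2) × Circle. If w is a complex scalar multiple of z, then the intersection of the stabilizers of z and w equals the stabilizer of z, which is conjugate in G to K. If z and w are linearly independent over ℂ, then the intersection of the stabilizers of z and w equals the two-element subgroup {(I, 1), (−I, −1)} of G, which is isomorphic to ℤ₂. -/

import Mathlib

/-!
The subgroup `K` is exactly the stabilizer of `e₂ = (0, 1)`: the second column of a fixing
matrix is `(0, v⁻¹)`, and an element of `SU(2)` is determined by its second column, because
its conjugate transpose equals its adjugate (`SU2_star_eq_adjugate`). Every nonzero `z` is a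
nonzero multiple of `a e₂` for some `a ∈ SU(2)` (`exists_SU2_mulVec`), and proportional vectors
have the same stabilizer by linearity, so the stabilizer of `z` is a conjugate of `K`.

If `g = (a, v)` fixes two linearly independent vectors, then the matrix `v a` is the identity;
taking determinants gives `v ^ 2 = 1`, so `v = ±1` and `a = v⁻¹ I = ±I`.
-/

/-- The special unitary group `SU(2)` as a subgroup of the unitary group of `2 × 2`
complex matrices. -/
def SU2 : Subgroup (Matrix.unitaryGroup (Fin 2) ℂ) where
  carrier := {A | (A : Matrix (Fin 2) (Fin 2) ℂ).det = 1}
  one_mem' := by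
    show (1 : Matrix (Fin 2) (Fin 2) ℂ).det = 1
    simp
  mul_mem' := by
    intro a b ha hb
    show ((a : Matrix (Fin 2) (Fin 2) ℂ) * (b : Matrix (Fin 2) (Fin 2) ℂ)).det = 1
    rw [Matrix.det_mul]
    rw [show ((a : Matrix (Fin 2) (Fin 2) ℂ)).det = 1 from ha,
      show ((b : Matrix (Fin 2) (Fin 2) ℂ)).det = 1 from hb, mul_one]
  inv_mem' := by
    intro a ha
    show (star (a : Matrix (Fin 2) (Fin 2) ℂ)).det = 1
    rw [Matrix.star_eq_conjTranspose, Matrix.det_conjTranspose,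
      show ((a : Matrix (Fin 2) (Fin 2) ℂ)).det = 1 from ha, star_one]

/-- The underlying matrix of an element of `SU(2)`. -/
def SU2mat (a : SU2) : Matrix (Fin 2) (Fin 2) ℂ :=
  ((a : Matrix.unitaryGroup (Fin 2) ℂ) : Matrix (Fin 2) (Fin 2) ℂ)

/-- The gauge group `G = SU(2) × U(1)` of the Glashow–Weinberg–Salam model. -/
abbrev GWSGroup := SU2 × Circle

/-- The Higgs representation `ρ_{(a,v)}(z) = v · (a z)` of `SU(2) × U(1)` on `ℂ²`. -/
noncomputable def higgsRep (g : GWSGroup) (z : Fin 2 → ℂ) : Fin 2 → ℂ :=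
  (g.2 : ℂ) • Matrix.mulVec (SU2mat g.1) z

/-- The subgroup `K ⊆ G`, the image of `v ↦ (diag(v, v⁻¹), v)`, viewed as a subset. -/
def GWSK : Set GWSGroup :=
  {g : GWSGroup | SU2mat g.1 = Matrix.diagonal ![(g.2 : ℂ), (g.2 : ℂ)⁻¹]}

theorem SU2mat_mul (a b : SU2) : SU2mat (a * b) = SU2mat a * SU2mat b := rfl

theorem SU2mat_det (a : SU2) : (SU2mat a).det = 1 := a.2

theorem higgsRep_mul (g h : GWSGroup) (z : Fin 2 → ℂ) :
    higgsRep (g * h) z = higgsRep g (higgsRep h z) := by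
  simp only [higgsRep, SU2mat_mul, Matrix.mulVec_smul, smul_smul, Matrix.mulVec_mulVec,
    Prod.fst_mul, Prod.snd_mul, Circle.coe_mul]

theorem higgsRep_one (z : Fin 2 → ℂ) : higgsRep 1 z = z := by
  have h : SU2mat 1 = 1 := rfl
  simp [higgsRep, h]

theorem higgsRep_smul (g : GWSGroup) (c : ℂ) (z : Fin 2 → ℂ) :
    higgsRep g (c • z) = c • higgsRep g z := by
  simp only [higgsRep, Matrix.mulVec_smul, smul_comm c]

/-- Both sides are inverse to `a`, which is unitary of determinant one. -/
theorem SU2_star_eq_adjugate (a : SU2) : star (SU2mat a) = (SU2mat a).adjugate := by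
  have h1 : star (SU2mat a) * SU2mat a = 1 := Matrix.mem_unitaryGroup_iff'.1 a.1.2
  have h2 : SU2mat a * (SU2mat a).adjugate = 1 := by
    rw [Matrix.mul_adjugate, SU2mat_det, one_smul]
  exact left_inv_eq_right_inv h1 h2

theorem stabilizer_e₂ : {g : GWSGroup | higgsRep g ![0, 1] = ![0, 1]} = GWSK := by
  ext ⟨a, v⟩
  have hv : (v : ℂ) ≠ 0 := v.coe_ne_zero
  simp only [Set.mem_ofPred_eq, GWSK]
  constructor
  · intro h
    have h0 := congrFun h 0
    have h1 := congrFun h 1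
    have hs := SU2_star_eq_adjugate a
    have s0 := congrFun (congrFun hs 0) 0
    have s1 := congrFun (congrFun hs 0) 1
    simp [higgsRep] at h0 h1
    simp [Matrix.adjugate_fin_two, Matrix.star_apply] at s0 s1
    have e1 : SU2mat a 1 1 = (v : ℂ)⁻¹ := eq_inv_of_mul_eq_one_right h1
    rw [h0, neg_zero, map_eq_zero] at s1
    have e0 : SU2mat a 0 0 = v := by
      rw [← Complex.conj_conj (SU2mat a 0 0), s0, e1, ← Circle.coe_inv,
        ← Circle.coe_inv_eq_conj, inv_inv]
    ext i j
    fin_cases i <;> fin_cases j <;> simp [e0, e1, h0, s1]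
  · intro h
    ext i
    fin_cases i <;> simp [higgsRep, h]

/-- With the Euclidean norm on `ℂ²`, the unit vector `(x, y) = z / ‖z‖` is the second column
of an element of `SU(2)` with first column `(ȳ, -x̄)`. -/
theorem exists_SU2_mulVec (z : Fin 2 → ℂ) (hz : z ≠ 0) :
    ∃ (a : SU2) (r : ℂ), r ≠ 0 ∧ z = r • (SU2mat a).mulVec ![0, 1] := by
  have hpos : 0 < Complex.normSq (z 0) + Complex.normSq (z 1) := by
    have n0 := Complex.normSq_nonneg (z 0)
    have n1 := Complex.normSq_nonneg (z 1)
    by_contra hc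
    refine hz (funext fun i => ?_)
    fin_cases i
    · exact Complex.normSq_eq_zero.1 (le_antisymm (by dsimp; linarith) n0)
    · exact Complex.normSq_eq_zero.1 (le_antisymm (by dsimp; linarith) n1)
  obtain ⟨r, hr, hrr⟩ : ∃ r : ℝ, r ≠ 0 ∧
      r * r = Complex.normSq (z 0) + Complex.normSq (z 1) :=
    ⟨_, (Real.sqrt_pos.2 hpos).ne', Real.mul_self_sqrt hpos.le⟩
  have hr' : (r : ℂ) ≠ 0 := Complex.ofReal_ne_zero.2 hr
  have hrc : (r : ℂ) * r = z 0 * star (z 0) + z 1 * star (z 1) := by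
    have := congrArg (Complex.ofReal) hrr
    simpa [← Complex.mul_conj] using this
  have hu : !![star (z 1) / r, z 0 / r; -star (z 0) / r, z 1 / r] ∈
      Matrix.unitaryGroup (Fin 2) ℂ := by
    rw [Matrix.mem_unitaryGroup_iff]
    simp only [Complex.star_def] at hrc ⊢
    ext i j
    fin_cases i <;> fin_cases j <;>
      simp [Matrix.mul_apply, Fin.sum_univ_two, Matrix.star_apply] <;> field_simp <;>
      grind
  refine ⟨⟨⟨_, hu⟩, ?_⟩, r, hr', ?_⟩
  · show Matrix.det !![star (z 1) / r, z 0 / r; -star (z 0) / r, z 1 / r] = 1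
    rw [Matrix.det_fin_two_of]
    field_simp
    grind
  · ext i
    fin_cases i <;> simp [SU2mat] <;> field_simp

/-- Stabilizers of vectors in the same orbit of `G`, up to a nonzero scalar, are conjugate. -/
theorem stabilizer_conj (b : GWSGroup) (r : ℂ) (hr : r ≠ 0) (x : Fin 2 → ℂ) :
    {g : GWSGroup | higgsRep g (r • higgsRep b x) = r • higgsRep b x} =
      (fun y => b * y * b⁻¹) '' {g : GWSGroup | higgsRep g x = x} := by
  ext g
  simp only [Set.mem_ofPred_eq, Set.mem_image, higgsRep_smul]
  rw [(smul_right_injective _ hr).eq_iff]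
  constructor
  · intro h
    refine ⟨b⁻¹ * g * b, ?_, by group⟩
    rw [higgsRep_mul, higgsRep_mul, h, ← higgsRep_mul, inv_mul_cancel, higgsRep_one]
  · rintro ⟨y, hy, rfl⟩
    rw [← higgsRep_mul, inv_mul_cancel_right, higgsRep_mul, hy]

/-- For nonzero `z, w ∈ ℂ²`: if `w` is a complex scalar multiple of `z`, then the
intersection of the stabilizers of `z` and `w` under the Higgs representation equals the
stabilizer of `z`, which is conjugate in `G` to `K`; if `z` and `w` are linearly
independent over `ℂ`, then the intersection of the stabilizers equals the two-element
subgroup `{(I, 1), (−I, −1)}` of `G` (isomorphic to `ℤ₂`). -/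
theorem higgs_stabilizer_intersections (z w : Fin 2 → ℂ) (hz : z ≠ 0) (hw : w ≠ 0) :
    ((∃ c : ℂ, w = c • z) →
      ({g : GWSGroup | higgsRep g z = z} ∩ {g : GWSGroup | higgsRep g w = w} =
          {g : GWSGroup | higgsRep g z = z}) ∧
        ∃ a : GWSGroup,
          {g : GWSGroup | higgsRep g z = z} = (fun x => a * x * a⁻¹) '' GWSK) ∧
    (LinearIndependent ℂ ![z, w] →
      {g : GWSGroup | higgsRep g z = z} ∩ {g : GWSGroup | higgsRep g w = w} =
        {g : GWSGroup | (SU2mat g.1 = 1 ∧ (g.2 : ℂ) = 1) ∨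
          (SU2mat g.1 = -1 ∧ (g.2 : ℂ) = -1)}) := by
  refine ⟨?_, fun hli => ?_⟩
  · rintro ⟨c, rfl⟩
    refine ⟨Set.inter_eq_left.2 fun g hg => ?_, ?_⟩
    · simp only [Set.mem_ofPred_eq] at hg ⊢
      rw [higgsRep_smul, hg]
    · obtain ⟨a, r, hr, h⟩ := exists_SU2_mulVec z hz
      refine ⟨(a, 1), ?_⟩
      have h' : z = r • higgsRep (a, 1) ![0, 1] := by simpa [higgsRep] using h
      rw [h', stabilizer_conj _ _ hr, stabilizer_e₂]
  · ext ⟨a, v⟩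
    simp only [Set.mem_inter_iff, Set.mem_ofPred_eq]
    constructor
    · rintro ⟨h1, h2⟩
      have hM : IsUnit (Matrix.of ![z, w]) :=
        Matrix.linearIndependent_rows_iff_isUnit.1 hli
      have key : Matrix.of ![z, w] * ((v : ℂ) • SU2mat a).transpose = Matrix.of ![z, w] := by
        ext i j
        have e1 := congrFun h1 j
        have e2 := congrFun h2 j
        simp only [higgsRep, Matrix.mulVec, dotProduct, Fin.sum_univ_two, Pi.smul_apply,
          smul_eq_mul] at e1 e2
        fin_cases i <;> simp [Matrix.mul_apply, Fin.sum_univ_two]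
        · linear_combination e1
        · linear_combination e2
      have hA : (v : ℂ) • SU2mat a = 1 := by
        rw [← Matrix.transpose_inj, Matrix.transpose_one]
        exact hM.mul_left_cancel (key.trans (mul_one _).symm)
      have hd := congrArg Matrix.det hA
      rw [Matrix.det_smul, SU2mat_det, Matrix.det_one, mul_one, Fintype.card_fin,
        sq_eq_one_iff] at hd
      rcases hd with hd | hd
      · left
        rw [hd, one_smul] at hA
        exact ⟨hA, hd⟩
      · right
        rw [hd, neg_smul, one_smul] at hA
        exact ⟨neg_eq_iff_eq_neg.1 hA, hd⟩
    · rintro (⟨h1, h2⟩ | ⟨h1, h2⟩) <;> simp [higgsRep, h1, h2, Matrix.neg_mulVec]
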